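/- For every line segment [P,Q] in the class 𝒜(P₁,P₃) there exists a left boundary point P_← = P_←(P,Q), active for ℓ(P,Q), whose hinge H_← = H(P_←, ℓ(P,Q)) is a lower hinge and satisfies d_{P,Q}(H_←) ≤ d_{P,Q}(H) for every lower left hinge H of ℓ(P,Q); and there exists a right boundary point P_→ = P_→(P,Q), active for ℓ(P,Q), whose hinge H_→ is a lower hinge and satisfies d_{P,Q}(H_→) ≥ d_{P,Q}(H) for every lower right hinge H of ℓ(P,Q). Moreover d_{P,Q}(H_←) > d_{P,Q}(H_→). -/

import Mathlib

/-!
The extreme hinges belong to the crossing point `Z` of the right boundary curve with the reflected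
left one, and to the mirror image of `Z`.

Place the midpoint of the chord at the origin and let `U` be the domain and `V` its reflection about
the chord. On the half plane to the right of the chord the gauges of `U` and `V` agree only along
the ray through `Z`, so on each of the two sectors cut out by this ray one of the two curves lies
inside the other. Near `P` the curve `∂U` lies outside `V`, because the inward normal at `P` points
to the left. Since the curves are not tangent at `Z`, their order is exchanged there, and this
forces the tangent of `∂U` at `Z` to meet the chord line closer to `P`. A right active point belongs
to `∂U` and to the closure of `V`, hence to the sector between `Z` and `Q`; a left one reflects to
the sector between `P` and `Z`. Finally, of two points of a convex curve whose tangents meet the ray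
beyond `P`, the one further along the curve from `P` has its tangent meeting the ray further away.
-/

noncomputable section

attribute [local instance] Classical.propDecidable

/-- Real inner product of two complex numbers viewed as vectors of `ℝ²` (identified
with `ℂ`). -/
def dotR (z w : ℂ) : ℝ := z.re * w.re + z.im * w.im

/-- The straight line `ℓ(A,B)` through the points `A` and `B`. -/
def lineThrough (A B : ℂ) : Set ℂ := {z | ∃ t : ℝ, z = A + t • (B - A)}

/-- The closed ray `ℛ[A,B)` contained in `ℓ(A,B)`, starting from `A` and not
containing `B`. -/
def rayFrom (A B : ℂ) : Set ℂ := {z | ∃ t : ℝ, t ≤ 0 ∧ z = A + t • (B - A)}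

/-- Reflection of the point `z` about the line `ℓ(A,B)`. -/
def reflLine (A B z : ℂ) : ℂ :=
  A + (B - A) / (starRingEnd ℂ (B - A)) * (starRingEnd ℂ (z - A))

/-- The angle `∠(A,B) ∈ [0,π)` between `e₁` and the line `ℓ(A,B)`. -/
def segAngle (A B : ℂ) : ℝ :=
  if Complex.arg (B - A) < 0 then Complex.arg (B - A) + Real.pi
  else if Complex.arg (B - A) = Real.pi then 0
  else Complex.arg (B - A)

/-- The argument of `z`, normalized to lie in `[0, 2π)`; applied to the inward normal
`n(A)` this is the angle `∠(A)` of the paper. -/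
def arg2pi (z : ℂ) : ℝ :=
  if Complex.arg z < 0 then Complex.arg z + 2 * Real.pi else Complex.arg z

/-- `C` is on the left of the (non-horizontal) line `ℓ(P,Q)`: moving from `C` in the
direction `e₁ = 1` by some positive amount lands on the line. -/
def onLeft (P Q C : ℂ) : Prop := ∃ a : ℝ, 0 < a ∧ C + (a : ℂ) ∈ lineThrough P Q

/-- `C` is on the right of the (non-horizontal) line `ℓ(P,Q)`. -/
def onRight (P Q C : ℂ) : Prop := ∃ a : ℝ, 0 < a ∧ C - (a : ℂ) ∈ lineThrough P Q

/-- A boundary point `A ∈ ∂D ∖ ℓ(P,Q)` is active for `ℓ(P,Q)` if its reflection about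
`ℓ(P,Q)` lies in the closure of `D`. -/
def IsActive (D : Set ℂ) (P Q A : ℂ) : Prop :=
  A ∈ frontier D ∧ A ∉ lineThrough P Q ∧ reflLine P Q A ∈ closure D

/-- The closed arc of the curve `C` joining `A` and `B` and avoiding the point `avoid`:
the endpoints together with the part of `C ∖ {A,B}` not in the connected component
of `avoid`. -/
def arcAvoid (C : Set ℂ) (A B avoid : ℂ) : Set ℂ :=
  insert A (insert B ((C \ {A, B}) \ connectedComponentIn (C \ {A, B}) avoid))

/-- The distance function `d_{P,Q}` on `ℓ(P,Q)`: distance to `Q` on the ray `ℛ[Q,P)`,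
distance to `P` otherwise (i.e. on `ℛ[P,Q)`). -/
def dPQ (P Q H : ℂ) : ℝ := if H ∈ rayFrom Q P then ‖H - Q‖ else ‖H - P‖

/-- The setting of the paper: a bounded strictly convex planar domain `D` with `C²`
boundary (encoded by a `C²` unit-speed periodic parametrization `γ` of `∂D`), the unit
inward normal field `n`, an angle `α ∈ (0, π/2)`, and the four distinguished boundary
points `P₁, P'₁, Q₆, Q'₆` whose inward normals make angles `α`, `π−α`, `−α`, `−(π−α)`
with `e₁`. -/
structure MirrorSetup where
  D : Set ℂ
  hOpen : IsOpen D
  hNe : D.Nonempty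
  hBdd : Bornology.IsBounded D
  hConv : Convex ℝ D
  hStrict : ∀ x ∈ closure D, ∀ y ∈ closure D, x ≠ y → openSegment ℝ x y ⊆ D
  γ : ℝ → ℂ
  L : ℝ
  hL : 0 < L
  hγsmooth : ContDiff ℝ 2 γ
  hγper : Function.Periodic γ L
  hγrange : Set.range γ = frontier D
  hγspeed : ∀ t : ℝ, ‖deriv γ t‖ = 1
  hγinj : Set.InjOn γ (Set.Ico 0 L)
  n : ℂ → ℂ
  hn_unit : ∀ A ∈ frontier D, ‖n A‖ = 1
  hn_normal : ∀ A ∈ frontier D, ∀ y ∈ closure D, 0 ≤ dotR (y - A) (n A)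
  α : ℝ
  hα : α ∈ Set.Ioo 0 (Real.pi / 2)
  P₁ : ℂ
  P₁' : ℂ
  Q₆ : ℂ
  Q₆' : ℂ
  hP₁ : P₁ ∈ frontier D
  hP₁n : n P₁ = Complex.exp ((α : ℂ) * Complex.I)
  hP₁' : P₁' ∈ frontier D
  hP₁'n : n P₁' = Complex.exp (((Real.pi - α : ℝ) : ℂ) * Complex.I)
  hQ₆ : Q₆ ∈ frontier D
  hQ₆n : n Q₆ = Complex.exp (-(α : ℂ) * Complex.I)
  hQ₆' : Q₆' ∈ frontier D
  hQ₆'n : n Q₆' = Complex.exp (-((Real.pi - α : ℝ) : ℂ) * Complex.I)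

/-- The lower part `∂↓D` of the boundary: the closed arc from `P₁` to `P'₁` not
containing `Q₆`. -/
def lowerArc (S : MirrorSetup) : Set ℂ := arcAvoid (frontier S.D) S.P₁ S.P₁' S.Q₆

/-- The upper part `∂↑D` of the boundary: the closed arc from `Q'₆` to `Q₆` not
containing `P₁`. -/
def upperArc (S : MirrorSetup) : Set ℂ := arcAvoid (frontier S.D) S.Q₆' S.Q₆ S.P₁

/-- The tangent line to `∂D` at the boundary point `A` (the line through `A`
perpendicular to the inward normal `n(A)`). -/
def tangentLine (S : MirrorSetup) (A : ℂ) : Set ℂ := {z | dotR (z - A) (S.n A) = 0}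

/-- `H` is the hinge `H(A, ℓ(P,Q))` of the boundary point `A` at `ℓ(P,Q)`: `A` is active
for `ℓ(P,Q)` and `H` is an intersection point of `ℓ(P,Q)` with the tangent line
to `∂D` at `A`. -/
def IsHinge (S : MirrorSetup) (P Q A H : ℂ) : Prop :=
  IsActive S.D P Q A ∧ H ∈ lineThrough P Q ∧ H ∈ tangentLine S A

/-- The part `∂_R(P,Q)` of the boundary on the right of `ℓ(P,Q)` (excluding `P`, `Q`). -/
def bdRight (S : MirrorSetup) (P Q : ℂ) : Set ℂ := {A | A ∈ frontier S.D ∧ onRight P Q A}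

/-- The part `∂_L(P,Q)` of the boundary on the left of `ℓ(P,Q)` (excluding `P`, `Q`). -/
def bdLeft (S : MirrorSetup) (P Q : ℂ) : Set ℂ := {A | A ∈ frontier S.D ∧ onLeft P Q A}

/-- The class `𝒜(P₁,P₃)`: line segments `[P,Q]` with `P ∈ ∂↓D`, `Q ∈ ∂↑D`,
`P₁ < P < P₃` and `∠(P,Q) ∈ (α, ∠(P))`. -/
def classA (S : MirrorSetup) (P₃ : ℂ) (P Q : ℂ) : Prop :=
  P ∈ lowerArc S ∧ Q ∈ upperArc S ∧ S.P₁.re < P.re ∧ P.re < P₃.re ∧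
  S.α < segAngle P Q ∧ segAngle P Q < arg2pi (S.n P)

/-- Assumption A3 (for the range `𝒜(P₁,P₃)`): every segment of the class admits at least
one lower left hinge, and no upper right hinge. -/
def AssumptionA3 (S : MirrorSetup) (P₃ : ℂ) : Prop :=
  ∀ P Q : ℂ, classA S P₃ P Q →
    (∃ A H : ℂ, IsHinge S P Q A H ∧ H ∉ rayFrom Q P ∧ onLeft P Q A) ∧
    ¬ ∃ A H : ℂ, IsHinge S P Q A H ∧ H ∈ rayFrom Q P ∧ onRight P Q A

/-- Assumption A4 (for the range `𝒜(P₁,P₃)`): for every segment of the class, the curves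
`∂_R(P,Q)` and `∂̃_L(P,Q)` (the reflection of `∂_L(P,Q)` about `ℓ(P,Q)`) intersect at a
unique point, the intersection is nontangential, and both tangent lines at the
intersection point meet the ray `ℛ[P,Q)`. -/
def AssumptionA4 (S : MirrorSetup) (P₃ : ℂ) : Prop :=
  ∀ P Q : ℂ, classA S P₃ P Q →
    ∃ Z : ℂ, bdRight S P Q ∩ (reflLine P Q '' bdLeft S P Q) = {Z} ∧
      tangentLine S Z ≠ reflLine P Q '' tangentLine S (reflLine P Q Z) ∧
      (tangentLine S Z ∩ rayFrom P Q).Nonempty ∧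
      ((reflLine P Q '' tangentLine S (reflLine P Q Z)) ∩ rayFrom P Q).Nonempty

open Set Filter Topology
open scoped RealInnerProductSpace

/-! ### Gauges on cones -/

section Gauge

variable {E : Type*} [NormedAddCommGroup E] [NormedSpace ℝ E]

/-- The cone of vectors on which a linear functional is positive. -/
def openHalfSpace (f : E →ₗ[ℝ] ℝ) : ConvexCone ℝ E :=
  (ConvexCone.strictlyPositive ℝ ℝ).comap f

lemma blunt_openHalfSpace (f : E →ₗ[ℝ] ℝ) : (openHalfSpace f).Blunt :=
  fun h : 0 < f 0 => h.ne' (map_zero f)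

lemma blunt_openHalfSpace_inf (f g : E →ₗ[ℝ] ℝ) : (openHalfSpace f ⊓ openHalfSpace g).Blunt :=
  (blunt_openHalfSpace f).anti inf_le_left

/-- A bounded open convex neighbourhood of the origin: such a set is the open unit ball of its
gauge, which is continuous and vanishes only at the origin. -/
structure IsGaugeBall (U : Set E) : Prop where
  convex : Convex ℝ U
  isOpen : IsOpen U
  zero_mem : 0 ∈ U
  isBounded : Bornology.IsBounded U

namespace IsGaugeBall

variable {U V : Set E} {C : ConvexCone ℝ E}

lemma mem_nhds (hU : IsGaugeBall U) : U ∈ 𝓝 0 := hU.isOpen.mem_nhds hU.zero_mem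

lemma notMem_of_mem_frontier (hU : IsGaugeBall U) {w : E} (hw : w ∈ frontier U) : w ∉ U :=
  (hU.isOpen.frontier_eq ▸ hw).2

lemma continuous_gauge (hU : IsGaugeBall U) : Continuous (gauge U) :=
  _root_.continuous_gauge hU.convex hU.mem_nhds

lemma gauge_pos (hU : IsGaugeBall U) (hC : C.Blunt) {w : E} (hw : w ∈ C) : 0 < gauge U w :=
  (_root_.gauge_pos (absorbent_nhds_zero hU.mem_nhds)
    ((NormedSpace.isVonNBounded_iff ℝ).2 hU.isBounded)).2 (ne_of_mem_of_not_mem hw hC)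

lemma gauge_lt_one_iff (hU : IsGaugeBall U) {w : E} : gauge U w < 1 ↔ w ∈ U := by
  rw [gauge_lt_one_iff_mem_interior hU.convex hU.mem_nhds, hU.isOpen.interior_eq]

lemma gauge_le_one_iff (hU : IsGaugeBall U) {w : E} : gauge U w ≤ 1 ↔ w ∈ closure U :=
  gauge_le_one_iff_mem_closure hU.convex hU.mem_nhds

lemma gauge_eq_one_iff (hU : IsGaugeBall U) {w : E} : gauge U w = 1 ↔ w ∈ frontier U :=
  gauge_eq_one_iff_mem_frontier hU.convex hU.mem_nhds

lemma inv_gauge_smul_mem_frontier (hU : IsGaugeBall U) {w : E} (hw : 0 < gauge U w) :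
    (gauge U w)⁻¹ • w ∈ frontier U := by
  rw [← hU.gauge_eq_one_iff, gauge_smul_of_nonneg (inv_nonneg.2 hw.le), smul_eq_mul,
    inv_mul_cancel₀ hw.ne']

/-- The gauges of `U` and `V` differ on `C`, so by connectedness they are ordered on all of `C` as
they are at `w₀`. -/
lemma closure_inter_subset (hU : IsGaugeBall U) (hV : IsGaugeBall V) (hC : C.Blunt)
    (hdisj : ∀ w ∈ C, w ∈ frontier U → w ∉ frontier V)
    {w₀ : E} (hw₀ : w₀ ∈ C) (hw₀V : w₀ ∈ V) (hw₀U : w₀ ∉ U) : closure U ∩ (C : Set E) ⊆ V := by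
  have hne : ∀ w ∈ C, gauge U w ≠ gauge V w := by
    intro w hw h
    have hpos := hU.gauge_pos hC hw
    refine hdisj _ (C.smul_mem (inv_pos.2 hpos) hw) (hU.inv_gauge_smul_mem_frontier hpos) ?_
    rw [h] at hpos ⊢
    exact hV.inv_gauge_smul_mem_frontier hpos
  rintro w ⟨hwU, hw⟩
  rw [← hU.gauge_le_one_iff] at hwU
  rw [← hV.gauge_lt_one_iff] at hw₀V ⊢
  rw [← hU.gauge_lt_one_iff, not_lt] at hw₀U
  by_contra! hwV
  obtain ⟨c, hc, h⟩ := C.convex.isPreconnected.intermediate_value₂ hw hw₀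
    hU.continuous_gauge.continuousOn hV.continuous_gauge.continuousOn
    (hwU.trans hwV) (hw₀V.le.trans hw₀U)
  exact hne c hc h

lemma isPreconnected_frontier_inter (hU : IsGaugeBall U) (hC : C.Blunt) :
    IsPreconnected (frontier U ∩ (C : Set E)) := by
  have himage : (fun w => (gauge U w)⁻¹ • w) '' C = frontier U ∩ (C : Set E) := by
    refine Subset.antisymm ?_ fun w hw => ⟨w, hw.2, ?_⟩
    · rintro _ ⟨w, hw, rfl⟩
      have hpos := hU.gauge_pos hC hw
      exact ⟨hU.inv_gauge_smul_mem_frontier hpos, C.smul_mem (inv_pos.2 hpos) hw⟩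
    · simp only [hU.gauge_eq_one_iff.2 hw.1, inv_one, one_smul]
  rw [← himage]
  refine C.convex.isPreconnected.image _ (ContinuousOn.smul ?_ continuousOn_id)
  exact hU.continuous_gauge.continuousOn.inv₀ fun w hw => (hU.gauge_pos hC hw).ne'

lemma preimage {D : Set E} {φ : E ≃ᵃⁱ[ℝ] E} (hconv : Convex ℝ D) (hD : IsOpen D)
    (hbdd : Bornology.IsBounded D) (h0 : φ 0 ∈ D) : IsGaugeBall (φ ⁻¹' D) where
  convex := hconv.affine_preimage φ.toAffineEquiv.toAffineMap
  isOpen := hD.preimage φ.continuous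
  zero_mem := h0
  isBounded := φ.antilipschitz.isBounded_preimage hbdd

end IsGaugeBall

lemma frontier_preimage_affineIsometryEquiv (φ : E ≃ᵃⁱ[ℝ] E) (D : Set E) :
    frontier (φ ⁻¹' D) = φ ⁻¹' frontier D :=
  (φ.toHomeomorph.preimage_frontier D).symm

lemma closure_preimage_affineIsometryEquiv (φ : E ≃ᵃⁱ[ℝ] E) (D : Set E) :
    closure (φ ⁻¹' D) = φ ⁻¹' closure D :=
  (φ.toHomeomorph.preimage_closure D).symm

lemma isPreconnected_frontier_inter_lt {D : Set E} (hconv : Convex ℝ D) (hD : IsOpen D)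
    (hbdd : Bornology.IsBounded D) {c : E} (hc : c ∈ D) (f : E →ₗ[ℝ] ℝ) :
    IsPreconnected (frontier D ∩ {w | f c < f w}) := by
  let φ := AffineIsometryEquiv.constVAdd ℝ E c
  have hU : IsGaugeBall (φ ⁻¹' D) := .preimage hconv hD hbdd (by simpa [φ] using hc)
  convert (hU.isPreconnected_frontier_inter (blunt_openHalfSpace f)).image φ
    φ.continuous.continuousOn using 1
  rw [frontier_preimage_affineIsometryEquiv, image_preimage_inter]
  congr 1
  ext w
  refine ⟨fun (hw : f c < f w) => ⟨w - c, ?_, by simp [φ]⟩, ?_⟩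
  · change 0 < f (w - c)
    rwa [map_sub, sub_pos]
  · rintro ⟨v, hv : 0 < f v, rfl⟩
    simpa [φ] using hv

end Gauge

/-! ### Inward normals and tangent lines -/

section Normal

variable {E : Type*} [NormedAddCommGroup E] [NormedSpace ℝ E]

/-- The displayed point is a convex combination of `γ (t₀ + ε b)` and a point tending to `y`. -/
lemma eventually_add_smul_mem_of_hasDerivAt {D : Set E} (hconv : Convex ℝ D) (hD : IsOpen D)
    {γ : ℝ → E} {τ : E} {t₀ : ℝ} (hγ : HasDerivAt γ τ t₀) (hmem : ∀ t, γ t ∈ closure D)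
    {y : E} (hy : y ∈ D) {c : ℝ} (hc : 0 < c) (b : ℝ) :
    ∀ᶠ ε in 𝓝[>] (0 : ℝ), γ t₀ + ε • (c • (y - γ t₀) + b • τ) ∈ D := by
  have hg : HasDerivAt (fun ε => γ (t₀ + b * ε)) (b • τ) 0 := by
    have hlin : HasDerivAt (fun ε => t₀ + b * ε) b 0 := by
      simpa using ((hasDerivAt_id (0 : ℝ)).const_mul b).const_add t₀
    exact HasDerivAt.scomp (0 : ℝ) (by simpa using hγ) hlin
  have hslope : Tendsto (fun ε => ε⁻¹ • (γ (t₀ + b * ε) - γ t₀)) (𝓝[>] 0) (𝓝 (b • τ)) := by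
    simpa using hg.tendsto_slope_zero_right
  have hγ0 : Tendsto (fun ε => γ (t₀ + b * ε)) (𝓝[>] 0) (𝓝 (γ t₀)) := by
    simpa using hg.continuousAt.tendsto.mono_left nhdsWithin_le_nhds
  have hlim : Tendsto (fun ε => y + c⁻¹ • (b • τ - ε⁻¹ • (γ (t₀ + b * ε) - γ t₀)) +
      (γ (t₀ + b * ε) - γ t₀)) (𝓝[>] 0) (𝓝 y) := by
    simpa using ((hslope.const_sub (b • τ)).const_smul c⁻¹ |>.const_add y).add
      (hγ0.sub_const (γ t₀))
  have hsmall : ∀ᶠ ε in 𝓝[>] (0 : ℝ), ε * c < 1 :=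
    (((continuous_mul_const c).tendsto' 0 0 (zero_mul c)).mono_left nhdsWithin_le_nhds).eventually
      (gt_mem_nhds one_pos)
  filter_upwards [hlim.eventually (hD.mem_nhds hy), hsmall, self_mem_nhdsWithin]
    with ε hε hε1 (hε0 : 0 < ε)
  rw [← hD.interior_eq] at hε ⊢
  convert hconv.combo_closure_interior_mem_interior (hmem (t₀ + b * ε)) hε
    (sub_nonneg.2 hε1.le) (mul_pos hε0 hc) (sub_add_cancel 1 (ε * c)) using 1
  match_scalars <;> field_simp
  ring

lemma eventually_add_smul_mem {U : Set E} (hconv : Convex ℝ U) (hU : IsOpen U) {a w : E}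
    (ha : a ∈ closure U) (hw : w ∈ U) : ∀ᶠ ε in 𝓝[>] (0 : ℝ), a + ε • (w - a) ∈ U := by
  filter_upwards [Ioc_mem_nhdsGT one_pos] with ε hε
  rw [← hU.interior_eq] at hw ⊢
  exact hconv.add_smul_sub_mem_interior' ha hw hε

lemma eventually_pos_map_add_smul {f : E →ₗ[ℝ] ℝ} {a : E} (ha : 0 < f a) (v : E) :
    ∀ᶠ ε in 𝓝[>] (0 : ℝ), 0 < f (a + ε • v) := by
  have hcont : Continuous fun ε : ℝ => f a + ε * f v := by fun_prop
  have hlim := hcont.tendsto' 0 (f a) (by simp)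
  filter_upwards [nhdsWithin_le_nhds (hlim.eventually (lt_mem_nhds ha))] with ε hε
  simpa using hε

end Normal

section InnerProduct

variable {E : Type*} [NormedAddCommGroup E] [InnerProductSpace ℝ E]

/-- The vector `n` is an inward normal to `U` at the smooth boundary point `a`: the rays from `a`
that start inside `U` are those forming an acute angle with `n`. -/
def IsInwardNormal (U : Set E) (a n : E) : Prop :=
  ∀ v : E, (∀ᶠ ε in 𝓝[>] (0 : ℝ), a + ε • v ∈ U) ↔ 0 < ⟪v, n⟫

/-- The boundary of `U` is smooth at `a` and its tangent there passes through `h`. -/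
def TangentThrough (U : Set E) (a h : E) : Prop :=
  ∃ n : E, IsInwardNormal U a n ∧ ⟪h - a, n⟫ = 0

lemma exists_smul_eq_of_inner_eq_zero [Fact (Module.finrank ℝ E = 2)] {n v w : E} (hn : n ≠ 0)
    (hv : v ≠ 0) (hvn : ⟪v, n⟫ = 0) (hwn : ⟪w, n⟫ = 0) : ∃ b : ℝ, b • v = w := by
  have : Fact (Module.finrank ℝ E = 1 + 1) := ‹_›
  have hrank := Submodule.finrank_orthogonal_span_singleton (𝕜 := ℝ) (n := 1) hn
  obtain ⟨b, hb⟩ := (finrank_eq_one_iff_of_nonzero'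
    (⟨v, Submodule.mem_orthogonal_singleton_iff_inner_left.2 hvn⟩ : (ℝ ∙ n)ᗮ)
    (by simpa using hv)).1 hrank ⟨w, Submodule.mem_orthogonal_singleton_iff_inner_left.2 hwn⟩
  exact ⟨b, congrArg Subtype.val hb⟩

lemma inner_sub_pos_of_mem {D : Set E} (hD : IsOpen D) {a n y : E} (hn : n ≠ 0)
    (hsupp : ∀ y ∈ D, 0 ≤ ⟪y - a, n⟫) (hy : y ∈ D) : 0 < ⟪y - a, n⟫ := by
  have hlim : Tendsto (fun ε : ℝ => y - ε • n) (𝓝[>] 0) (𝓝 y) :=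
    ((by fun_prop : Continuous fun ε : ℝ => y - ε • n).tendsto' 0 y (by simp)).mono_left
      nhdsWithin_le_nhds
  obtain ⟨ε, hε, hε0 : 0 < ε⟩ :=
    ((hlim.eventually (hD.mem_nhds hy)).and self_mem_nhdsWithin).exists
  have h := hsupp _ hε
  rw [sub_right_comm, inner_sub_left, real_inner_smul_left, sub_nonneg] at h
  exact (mul_pos hε0 (real_inner_self_pos.2 hn)).trans_le h

lemma inner_eq_zero_of_hasDerivAt {γ : ℝ → E} {τ n : E} {t₀ : ℝ} (hγ : HasDerivAt γ τ t₀)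
    (hsupp : ∀ t, 0 ≤ ⟪γ t - γ t₀, n⟫) : ⟪τ, n⟫ = 0 := by
  have hmin : IsLocalMin (fun t => ⟪γ t - γ t₀, n⟫) t₀ :=
    Eventually.of_forall fun t => by simpa using hsupp t
  refine hmin.hasDerivAt_eq_zero ?_
  simpa using (hγ.sub_const (γ t₀)).inner ℝ (hasDerivAt_const t₀ n)

lemma isInwardNormal_of_hasDerivAt [Fact (Module.finrank ℝ E = 2)] {D : Set E}
    (hconv : Convex ℝ D) (hD : IsOpen D) (hne : D.Nonempty) {γ : ℝ → E} {τ n : E} {t₀ : ℝ}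
    (hγ : HasDerivAt γ τ t₀) (hτ : τ ≠ 0) (hmem : ∀ t, γ t ∈ closure D) (hn : n ≠ 0)
    (hsupp : ∀ y ∈ closure D, 0 ≤ ⟪y - γ t₀, n⟫) : IsInwardNormal D (γ t₀) n := by
  have hpos {y : E} (hy : y ∈ D) : 0 < ⟪y - γ t₀, n⟫ :=
    inner_sub_pos_of_mem hD hn (fun y hy => hsupp y (subset_closure hy)) hy
  refine fun v => ⟨fun hv => ?_, fun hv => ?_⟩
  · obtain ⟨ε, hε, hε0 : 0 < ε⟩ := (hv.and self_mem_nhdsWithin).exists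
    have h := hpos hε
    rwa [add_sub_cancel_left, real_inner_smul_left, mul_pos_iff_of_pos_left hε0] at h
  · obtain ⟨y, hy⟩ := hne
    obtain ⟨b, hb⟩ := exists_smul_eq_of_inner_eq_zero hn hτ
      (inner_eq_zero_of_hasDerivAt hγ fun t => hsupp _ (hmem t))
      (show ⟪v - (⟪v, n⟫ / ⟪y - γ t₀, n⟫) • (y - γ t₀), n⟫ = 0 by
        rw [inner_sub_left, real_inner_smul_left, div_mul_cancel₀ _ (hpos hy).ne', sub_self])
    simpa [hb] using
      eventually_add_smul_mem_of_hasDerivAt hconv hD hγ hmem hy (div_pos hv (hpos hy)) b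

lemma TangentThrough.preimage {D : Set E} {φ : E ≃ᵃⁱ[ℝ] E} {a h : E}
    (hT : TangentThrough D (φ a) (φ h)) : TangentThrough (φ ⁻¹' D) a h := by
  obtain ⟨n, hn, hh⟩ := hT
  have hinner (v : E) : ⟪v, φ.linearIsometryEquiv.symm n⟫ = ⟪φ.linearIsometryEquiv v, n⟫ :=
    (φ.linearIsometryEquiv.inner_map_eq_flip v n).symm
  refine ⟨φ.linearIsometryEquiv.symm n, fun v => ?_, ?_⟩
  · rw [hinner, ← hn]
    simp [add_comm a, add_comm (φ a), ← vadd_eq_add, φ.map_vadd]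
  · rw [hinner, ← hh, ← vsub_eq_sub, φ.map_vsub]
    rfl

end InnerProduct

/-! ### Tangent lines of plane convex sets -/

section Plane

variable {E : Type*} [NormedAddCommGroup E] [InnerProductSpace ℝ E]
  [Fact (Module.finrank ℝ E = 2)] {o : Orientation ℝ E (Fin 2)}

local notation "ω" => Orientation.areaForm o

lemma exists_smul_eq_of_areaForm_eq_zero {u w : E} (hu : u ≠ 0) (h : ω u w = 0) :
    ∃ b : ℝ, b • u = w := by
  rw [← o.inner_rightAngleRotation_left, real_inner_comm] at h
  refine exists_smul_eq_of_inner_eq_zero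
    ((map_ne_zero_iff _ o.rightAngleRotation.injective).2 hu) hu ?_ h
  rw [o.inner_rightAngleRotation_right, o.areaForm_apply_self, neg_zero]

lemma areaForm_reflection_singleton (u w : E) :
    ω u ((ℝ ∙ u).reflection w) = -ω u w := by
  rw [Submodule.reflection_singleton_apply, map_sub, map_nsmul, map_smul, o.areaForm_apply_self,
    smul_zero, smul_zero, zero_sub]

lemma areaForm_sub_smul_smul_sub (u a : E) (x m : ℝ) :
    ω (a - x • u) (m • u - a) = (x - m) * ω u a := by
  simp only [map_sub, map_smul, LinearMap.sub_apply, LinearMap.smul_apply, smul_eq_mul,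
    o.areaForm_apply_self, o.areaForm_swap a u]
  ring

lemma areaForm_smul_sub_self (u a : E) (m : ℝ) : ω a (m • u - a) = -m * ω u a := by
  simp only [map_sub, map_smul, smul_eq_mul, o.areaForm_apply_self, o.areaForm_swap a u]
  ring

lemma areaForm_sub_smul_self (u a : E) (x : ℝ) : ω (a - x • u) a = -x * ω u a := by
  simp only [map_sub, map_smul, LinearMap.sub_apply, LinearMap.smul_apply, smul_eq_mul,
    o.areaForm_apply_self]
  ring

lemma eq_of_areaForm_eq_zero {u a b : E} (ha : ω u a ≠ 0) (hu : ω u a = ω u b)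
    (hab : ω a b = 0) : a = b := by
  have h := o.inner_mul_areaForm_sub (a - b) u a
  have h₁ : ω (a - b) u = 0 := by
    rw [o.areaForm_swap, map_sub, hu, sub_self, neg_zero]
  have h₂ : ω (a - b) a = 0 := by
    rw [o.areaForm_swap, map_sub, hab, o.areaForm_apply_self, sub_self, neg_zero]
  rw [h₁, h₂, mul_zero, zero_mul, sub_zero, eq_comm, mul_eq_zero, or_iff_left ha] at h
  exact sub_eq_zero.1 (norm_eq_zero.1 (pow_eq_zero_iff two_ne_zero |>.1 h))

namespace TangentThrough

variable {U : Set E} {u a b h : E} {x y : ℝ}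

/-- The tangent direction `a - h` has `U` on its right because it has the origin on its right. -/
lemma eventually_mem_iff (hU : IsGaugeBall U) (ha : a ∈ closure U) (hT : TangentThrough U a h)
    (hpos : 0 < ω (a - h) a) (v : E) :
    (∀ᶠ ε in 𝓝[>] (0 : ℝ), a + ε • v ∈ U) ↔ ω (a - h) v < 0 := by
  obtain ⟨n, hn, hh⟩ := hT
  have hd : ⟪a - h, n⟫ = 0 := by rw [← neg_sub, inner_neg_left, hh, neg_zero]
  have hd0 : 0 < ‖a - h‖ ^ 2 := by
    refine pow_pos (norm_pos_iff.2 fun h0 => hpos.ne' ?_) 2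
    rw [h0, map_zero, LinearMap.zero_apply]
  have hmul (v : E) : ω (a - h) v * ω (a - h) n = ‖a - h‖ ^ 2 * ⟪v, n⟫ := by
    rw [← o.inner_mul_inner_add_areaForm_mul_areaForm, hd, mul_zero, zero_add]
  have hinner : 0 < ⟪-a, n⟫ :=
    (hn _).1 (by simpa using eventually_add_smul_mem hU.convex hU.isOpen ha hU.zero_mem)
  have hneg : ω (a - h) n < 0 := by
    have := hmul (-a)
    rw [map_neg] at this
    nlinarith [mul_pos hd0 hinner]
  rw [hn v, ← mul_pos_iff_of_pos_left hd0, ← hmul, mul_comm, ← smul_eq_mul,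
    smul_pos_iff_of_neg_left hneg]

lemma eventually_mem_iff_of_neg (hU : IsGaugeBall U) (ha : a ∈ closure U)
    (hT : TangentThrough U a (x • u)) (hua : 0 < ω u a) (hx : x < 0) (v : E) :
    (∀ᶠ ε in 𝓝[>] (0 : ℝ), a + ε • v ∈ U) ↔ ω (a - x • u) v < 0 := by
  refine hT.eventually_mem_iff hU ha ?_ v
  rw [areaForm_sub_smul_self]
  exact mul_pos (neg_pos.2 hx) hua

lemma eventually_mem_towards_iff (hU : IsGaugeBall U) (ha : a ∈ closure U)
    (hT : TangentThrough U a (x • u)) (hua : 0 < ω u a) (hx : x < 0) (m : ℝ) :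
    (∀ᶠ ε in 𝓝[>] (0 : ℝ), a + ε • (m • u - a) ∈ U) ↔ x < m := by
  rw [hT.eventually_mem_iff_of_neg hU ha hua hx, areaForm_sub_smul_smul_sub,
    mul_comm, ← smul_eq_mul, smul_neg_iff_of_pos_left hua, sub_neg]

lemma eventually_mem_away_iff (hU : IsGaugeBall U) (ha : a ∈ closure U)
    (hT : TangentThrough U a (x • u)) (hua : 0 < ω u a) (hx : x < 0) (m : ℝ) :
    (∀ᶠ ε in 𝓝[>] (0 : ℝ), a + ε • (a - m • u) ∈ U) ↔ m < x := by
  rw [hT.eventually_mem_iff_of_neg hU ha hua hx, ← neg_sub (m • u), map_neg,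
    areaForm_sub_smul_smul_sub, neg_neg_iff_pos, mul_pos_iff_of_pos_right hua, sub_pos]

lemma areaForm_sub_nonpos (hU : IsGaugeBall U) (ha : a ∈ closure U)
    (hT : TangentThrough U a (x • u)) (hua : 0 < ω u a) (hx : x < 0) {w : E}
    (hw : w ∈ closure U) : ω (a - x • u) (w - a) ≤ 0 := by
  have hcont : Continuous fun w => ω (a - x • u) (w - a) :=
    (o.areaForm' (a - x • u)).continuous.comp (continuous_id.sub continuous_const)
  refine closure_minimal (fun w hw => ?_) (isClosed_le hcont continuous_const) hw
  exact ((hT.eventually_mem_iff_of_neg hU ha hua hx _).1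
    (eventually_add_smul_mem hU.convex hU.isOpen ha hw)).le

/-- Each of the points `a`, `b` lies below the tangent line at the other one. -/
lemma le_of_areaForm_nonpos (hU : IsGaugeBall U) (ha : a ∈ closure U) (hb : b ∈ closure U)
    (hTa : TangentThrough U a (x • u)) (hTb : TangentThrough U b (y • u)) (hua : 0 < ω u a)
    (hub : 0 < ω u b) (hx : x < 0) (hy : y < 0) (hab : ω a b ≤ 0) : y ≤ x := by
  have hbelow := hTa.areaForm_sub_nonpos hU ha hua hx hb
  have hbelow' := hTb.areaForm_sub_nonpos hU hb hub hy ha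
  simp only [map_sub, map_smul, LinearMap.sub_apply, LinearMap.smul_apply, smul_eq_mul,
    o.areaForm_apply_self, o.areaForm_swap b a] at hbelow hbelow'
  rcases hab.lt_or_eq with hab | hab
  · have hlt : ω u a < ω u b := by nlinarith
    nlinarith [hlt]
  · obtain rfl : a = b := eq_of_areaForm_eq_zero hua.ne' (by nlinarith) hab
    refine le_of_forall_gt fun m hm => ?_
    rwa [← hTb.eventually_mem_towards_iff hU hb hub hy,
      hTa.eventually_mem_towards_iff hU ha hua hx]

end TangentThrough

/-! ### Crossing plane convex curves -/

/-- The part of the plane to the left of the vector `u` contains a single common boundary point `ζ`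
of `U` and `V`. The tangents to `U` and `V` at `ζ` are distinct and pass through the points `x • u`
and `y • u` of the negative half line. Somewhere to the left of `ζ` there is a point of `V` outside
`U`. -/
structure IsCrossing (o : Orientation ℝ E (Fin 2)) (u : E) (U V : Set E) (ζ : E) (x y : ℝ) :
    Prop where
  fst : IsGaugeBall U
  snd : IsGaugeBall V
  pos : 0 < o.areaForm u ζ
  mem_frontier_fst : ζ ∈ frontier U
  mem_frontier_snd : ζ ∈ frontier V
  unique : ∀ w, 0 < o.areaForm u w → w ∈ frontier U → w ∈ frontier V → w = ζ
  tangent_fst : TangentThrough U ζ (x • u)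
  tangent_snd : TangentThrough V ζ (y • u)
  fst_neg : x < 0
  snd_neg : y < 0
  ne : x ≠ y
  exists_mem : ∃ w ∈ V \ U, 0 < o.areaForm u w ∧ 0 < o.areaForm ζ w

namespace IsCrossing

variable {u ζ a w : E} {U V : Set E} {x y z : ℝ}

lemma notMem_frontier_snd (h : IsCrossing o u U V ζ x y) (hu : 0 < ω u w) (hζ : ω ζ w ≠ 0)
    (hU : w ∈ frontier U) : w ∉ frontier V := fun hV => by
  rw [h.unique w hu hU hV, o.areaForm_apply_self] at hζ
  exact hζ rfl

lemma mem_snd (h : IsCrossing o u U V ζ x y) (hu : 0 < ω u w) (hζ : 0 < ω ζ w)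
    (hw : w ∈ closure U) : w ∈ V := by
  obtain ⟨w₀, ⟨hV, hU⟩, hu₀, hζ₀⟩ := h.exists_mem
  exact h.fst.closure_inter_subset h.snd (C := openHalfSpace (ω u) ⊓ openHalfSpace (ω ζ))
    (blunt_openHalfSpace_inf _ _)
    (fun w hw => h.notMem_frontier_snd hw.1 (ne_of_gt hw.2)) ⟨hu₀, hζ₀⟩ hV hU ⟨hw, hu, hζ⟩

/-- Otherwise a ray from `ζ` to a point of the line between the two tangents would run into `U` but
not into `V`, although it lies to the left of `ζ`. -/
lemma snd_lt_fst (h : IsCrossing o u U V ζ x y) : y < x := by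
  refine h.ne.lt_or_gt.resolve_left fun hxy => ?_
  obtain ⟨m, hxm, hmy⟩ := exists_between hxy
  refine hmy.not_gt ((h.tangent_snd.eventually_mem_towards_iff h.snd
    (frontier_subset_closure h.mem_frontier_snd) h.pos h.snd_neg m).1 ?_)
  filter_upwards [(h.tangent_fst.eventually_mem_towards_iff h.fst
    (frontier_subset_closure h.mem_frontier_fst) h.pos h.fst_neg m).2 hxm,
    eventually_pos_map_add_smul h.pos (m • u - ζ), self_mem_nhdsWithin]
    with ε hU hpos (hε : 0 < ε)
  refine h.mem_snd hpos ?_ (subset_closure hU)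
  rw [map_add, map_smul, o.areaForm_apply_self, areaForm_smul_sub_self, zero_add]
  exact smul_pos hε (mul_pos (neg_pos.2 (hmy.trans h.snd_neg)) h.pos)

/-- Continued beyond `ζ`, a ray between the two tangents runs into `U` but not into `V`, to the
right of `ζ`. -/
lemma exists_mem_fst (h : IsCrossing o u U V ζ x y) :
    ∃ w ∈ U \ V, 0 < ω u w ∧ ω ζ w < 0 := by
  obtain ⟨m, hym, hmx⟩ := exists_between h.snd_lt_fst
  have hfreq : ∃ᶠ ε in 𝓝[>] (0 : ℝ), ζ + ε • (ζ - m • u) ∉ V :=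
    fun hV => hym.not_gt ((h.tangent_snd.eventually_mem_away_iff h.snd
      (frontier_subset_closure h.mem_frontier_snd) h.pos h.snd_neg m).1 (by simpa using hV))
  obtain ⟨ε, hV, hU, hpos, hε : 0 < ε⟩ := (hfreq.and_eventually
    (((h.tangent_fst.eventually_mem_away_iff h.fst
      (frontier_subset_closure h.mem_frontier_fst) h.pos h.fst_neg m).2 hmx).and
    ((eventually_pos_map_add_smul h.pos (ζ - m • u)).and self_mem_nhdsWithin))).exists
  refine ⟨_, ⟨hU, hV⟩, hpos, ?_⟩
  rw [map_add, map_smul, o.areaForm_apply_self, ← neg_sub, map_neg, areaForm_smul_sub_self,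
    zero_add]
  exact smul_neg_of_pos_of_neg hε (neg_neg_of_pos
    (mul_pos (neg_pos.2 (hmx.trans h.fst_neg)) h.pos))

lemma mem_fst (h : IsCrossing o u U V ζ x y) (hu : 0 < ω u w) (hζ : ω ζ w < 0)
    (hw : w ∈ closure V) : w ∈ U := by
  obtain ⟨w₀, ⟨hU, hV⟩, hu₀, hζ₀⟩ := h.exists_mem_fst
  exact h.snd.closure_inter_subset h.fst (C := openHalfSpace (ω u) ⊓ openHalfSpace (-ω ζ))
    (blunt_openHalfSpace_inf _ _)
    (fun w hw hV hU => h.notMem_frontier_snd hw.1 (neg_pos.1 hw.2).ne hU hV)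
    ⟨hu₀, neg_pos.2 hζ₀⟩ hU hV ⟨hw, hu, neg_pos.2 hζ⟩

lemma fst_le (h : IsCrossing o u U V ζ x y) (hu : 0 < ω u a) (hU : a ∈ frontier U)
    (hV : a ∈ closure V) (hT : TangentThrough U a (z • u)) (hz : z < 0) : x ≤ z := by
  refine hT.le_of_areaForm_nonpos h.fst (frontier_subset_closure hU)
    (frontier_subset_closure h.mem_frontier_fst) h.tangent_fst hu h.pos hz h.fst_neg ?_
  rw [o.areaForm_swap, neg_nonpos]
  by_contra! hζ
  exact h.fst.notMem_of_mem_frontier hU (h.mem_fst hu hζ hV)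

lemma le_snd (h : IsCrossing o u U V ζ x y) (hu : 0 < ω u a) (hV : a ∈ frontier V)
    (hU : a ∈ closure U) (hT : TangentThrough V a (z • u)) (hz : z < 0) : z ≤ y := by
  refine h.tangent_snd.le_of_areaForm_nonpos h.snd (frontier_subset_closure h.mem_frontier_snd)
    (frontier_subset_closure hV) hT h.pos hu h.snd_neg hz ?_
  by_contra! hζ
  exact h.snd.notMem_of_mem_frontier hV (h.mem_snd hu hζ hU)

end IsCrossing

end Plane

/-! ### Lines in the complex plane -/

section ComplexPlane

attribute [local instance] Complex.finrank_real_complex_fact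

variable {P Q z w H : ℂ} {x : ℝ}

lemma ne_of_sub_im_ne_zero (h : (Q - P).im ≠ 0) : P ≠ Q := by
  rintro rfl
  simp at h

lemma dotR_eq_inner (z w : ℂ) : dotR z w = ⟪z, w⟫ := by
  simp [dotR, Complex.inner, mul_comm]

lemma add_smul_sub_eq_midpoint (P Q : ℂ) (t : ℝ) :
    P + t • (Q - P) = midpoint ℝ P Q + (t - 1 / 2) • (Q - P) := by
  rw [midpoint_eq_smul_add, invOf_eq_inv]
  module

lemma mem_lineThrough_iff :
    z ∈ lineThrough P Q ↔ ∃ x : ℝ, z = midpoint ℝ P Q + x • (Q - P) :=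
  ⟨fun ⟨t, ht⟩ => ⟨t - 1 / 2, ht.trans (add_smul_sub_eq_midpoint P Q t)⟩,
    fun ⟨x, hx⟩ => ⟨x + 1 / 2, by rw [hx, add_smul_sub_eq_midpoint, add_sub_cancel_right]⟩⟩

lemma mem_rayFrom_iff :
    z ∈ rayFrom P Q ↔ ∃ x ≤ -(1 / 2 : ℝ), z = midpoint ℝ P Q + x • (Q - P) :=
  ⟨fun ⟨t, ht, h⟩ => ⟨t - 1 / 2, by linarith, h.trans (add_smul_sub_eq_midpoint P Q t)⟩,
    fun ⟨x, hx, h⟩ =>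
      ⟨x + 1 / 2, by linarith, by rw [h, add_smul_sub_eq_midpoint, add_sub_cancel_right]⟩⟩

lemma mem_rayFrom_swap_iff :
    z ∈ rayFrom Q P ↔ ∃ x ≥ (1 / 2 : ℝ), z = midpoint ℝ P Q + x • (Q - P) := by
  rw [mem_rayFrom_iff, midpoint_comm, ← neg_sub Q P]
  exact ⟨fun ⟨x, hx, h⟩ => ⟨-x, by linarith, by rw [h, neg_smul, smul_neg]⟩,
    fun ⟨x, hx, h⟩ => ⟨-x, by linarith, by rw [h, neg_smul_neg]⟩⟩

lemma midpoint_add_smul_mem_rayFrom_swap_iff (h : P ≠ Q) :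
    midpoint ℝ P Q + x • (Q - P) ∈ rayFrom Q P ↔ 1 / 2 ≤ x := by
  rw [mem_rayFrom_swap_iff]
  refine ⟨fun ⟨y, hy, hxy⟩ => ?_, fun hx => ⟨x, hx, rfl⟩⟩
  rwa [smul_left_injective ℝ (sub_ne_zero.2 h.symm) (add_left_cancel hxy)]

lemma dPQ_midpoint_add_smul (h : P ≠ Q) (hx : x ≤ -(1 / 2)) :
    dPQ P Q (midpoint ℝ P Q + x • (Q - P)) = (-(1 / 2) - x) * ‖Q - P‖ := by
  have hsub : midpoint ℝ P Q + x • (Q - P) - P = (x + 1 / 2) • (Q - P) := by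
    rw [sub_eq_iff_eq_add', add_smul_sub_eq_midpoint, add_sub_cancel_right]
  rw [dPQ, if_neg ((midpoint_add_smul_mem_rayFrom_swap_iff h).not.2 (by linarith)), hsub,
    norm_smul, Real.norm_eq_abs, abs_of_nonpos (by linarith)]
  ring

lemma reflection_singleton_apply_eq_div_conj {u : ℂ} (hu : u ≠ 0) (w : ℂ) :
    (ℝ ∙ u).reflection w = u / starRingEnd ℂ u * starRingEnd ℂ w := by
  have hu' : starRingEnd ℂ u ≠ 0 := (map_ne_zero _).2 hu
  rw [Submodule.reflection_singleton_apply, two_nsmul, Complex.real_smul, Complex.inner,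
    RCLike.ofReal_real_eq_id, id]
  push_cast
  rw [Complex.re_eq_add_conj, ← Complex.mul_conj']
  simp only [map_mul, Complex.conj_conj]
  field_simp
  ring

lemma reflLine_midpoint_add (h : P ≠ Q) (w : ℂ) :
    reflLine P Q (midpoint ℝ P Q + w) = midpoint ℝ P Q + (ℝ ∙ (Q - P)).reflection w := by
  have hu : Q - P ≠ 0 := sub_ne_zero.2 h.symm
  have hself := Submodule.reflection_mem_subspace_eq_self
    (Submodule.mem_span_singleton_self (R := ℝ) (Q - P))
  have hsub : midpoint ℝ P Q - P = (1 / 2 : ℝ) • (Q - P) := by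
    rw [midpoint_sub_left, invOf_eq_inv, one_div]
  rw [reflLine, ← reflection_singleton_apply_eq_div_conj hu, add_sub_right_comm, hsub, map_add,
    map_smul, hself, ← hsub, ← add_assoc, add_sub_cancel]

lemma mem_lineThrough_iff_areaForm_eq_zero (o : Orientation ℝ ℂ (Fin 2)) (h : P ≠ Q) :
    z ∈ lineThrough P Q ↔ o.areaForm (Q - P) (z - midpoint ℝ P Q) = 0 := by
  rw [mem_lineThrough_iff]
  constructor
  · rintro ⟨x, rfl⟩
    rw [add_sub_cancel_left, map_smul, o.areaForm_apply_self, smul_zero]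
  · intro hz
    obtain ⟨x, hx⟩ := exists_smul_eq_of_areaForm_eq_zero (sub_ne_zero.2 h.symm) hz
    exact ⟨x, by rw [hx, add_sub_cancel]⟩

/-- The orientation of the plane for which the right-hand side of a line of direction `u`, in the
sense of `onRight`, consists of the vectors `w` such that `(u, w)` is positively oriented. -/
def sideOrientation (u : ℂ) : Orientation ℝ ℂ (Fin 2) :=
  if 0 < u.im then -Complex.orientation else Complex.orientation

lemma areaForm_sideOrientation_one {u : ℂ} : (sideOrientation u).areaForm u 1 = |u.im| := by
  unfold sideOrientation
  split_ifs with hu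
  · simp [Orientation.areaForm_neg_orientation, Complex.areaForm, abs_of_pos hu]
  · simp [Complex.areaForm, abs_of_nonpos (not_lt.1 hu)]

lemma add_ofReal_mem_lineThrough_iff (him : (Q - P).im ≠ 0) (a : ℝ) :
    z + a ∈ lineThrough P Q ↔
      (sideOrientation (Q - P)).areaForm (Q - P) (z - midpoint ℝ P Q) = -a * |(Q - P).im| := by
  rw [mem_lineThrough_iff_areaForm_eq_zero (sideOrientation (Q - P)) (ne_of_sub_im_ne_zero him),
    add_sub_right_comm, map_add, ← mul_one (a : ℂ), ← Complex.real_smul, map_smul, smul_eq_mul,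
    areaForm_sideOrientation_one, neg_mul, eq_neg_iff_add_eq_zero]

lemma onRight_iff (him : (Q - P).im ≠ 0) :
    onRight P Q z ↔ 0 < (sideOrientation (Q - P)).areaForm (Q - P) (z - midpoint ℝ P Q) := by
  have h0 := abs_pos.2 him
  simp only [onRight, sub_eq_add_neg z, ← Complex.ofReal_neg, add_ofReal_mem_lineThrough_iff him,
    neg_neg]
  exact ⟨fun ⟨a, ha, hz⟩ => sub_eq_add_neg z _ ▸ hz ▸ mul_pos ha h0,
    fun hz => ⟨_, div_pos hz h0, (div_mul_cancel₀ _ h0.ne').symm⟩⟩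

lemma onLeft_iff (him : (Q - P).im ≠ 0) :
    onLeft P Q z ↔ (sideOrientation (Q - P)).areaForm (Q - P) (z - midpoint ℝ P Q) < 0 := by
  have h0 := abs_pos.2 him
  simp only [onLeft, add_ofReal_mem_lineThrough_iff him]
  exact ⟨fun ⟨a, ha, hz⟩ => hz ▸ mul_neg_of_neg_of_pos (neg_neg_of_pos ha) h0,
    fun hz => ⟨_, div_pos (neg_pos.2 hz) h0, by rw [neg_mul, div_mul_cancel₀ _ h0.ne', neg_neg]⟩⟩

/-! ### The two charts of a chord -/

/-- The isometry `w ↦ O + w` of the plane, where `O` is the midpoint of `P` and `Q`. In this chart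
the line through `P` and `Q` is the line spanned by `Q - P`. -/
def centerChart (P Q : ℂ) : ℂ ≃ᵃⁱ[ℝ] ℂ :=
  AffineIsometryEquiv.constVAdd ℝ ℂ (midpoint ℝ P Q)

/-- The chart `centerChart P Q` preceded by the reflection about the line spanned by `Q - P`. -/
def mirrorChart (P Q : ℂ) : ℂ ≃ᵃⁱ[ℝ] ℂ :=
  (ℝ ∙ (Q - P)).reflection.toAffineIsometryEquiv.trans (centerChart P Q)

lemma centerChart_apply (P Q w : ℂ) : centerChart P Q w = midpoint ℝ P Q + w := rfl

lemma mirrorChart_apply (P Q w : ℂ) :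
    mirrorChart P Q w = midpoint ℝ P Q + (ℝ ∙ (Q - P)).reflection w := rfl

lemma midpoint_add_neg_half_smul (P Q : ℂ) : midpoint ℝ P Q + (-(1 / 2) : ℝ) • (Q - P) = P := by
  simpa using (add_smul_sub_eq_midpoint P Q 0).symm

lemma mirrorChart_smul (P Q : ℂ) (x : ℝ) :
    mirrorChart P Q (x • (Q - P)) = midpoint ℝ P Q + x • (Q - P) := by
  rw [mirrorChart_apply, Submodule.reflection_mem_subspace_eq_self
    (Submodule.smul_mem _ x (Submodule.mem_span_singleton_self _))]

lemma reflLine_centerChart (h : P ≠ Q) (w : ℂ) :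
    reflLine P Q (centerChart P Q w) = mirrorChart P Q w :=
  reflLine_midpoint_add h w

lemma reflLine_mirrorChart (h : P ≠ Q) (w : ℂ) :
    reflLine P Q (mirrorChart P Q w) = centerChart P Q w := by
  rw [mirrorChart_apply, reflLine_midpoint_add h, Submodule.reflection_reflection,
    centerChart_apply]

lemma image_reflLine (h : P ≠ Q) (T : Set ℂ) :
    reflLine P Q '' T = centerChart P Q '' (mirrorChart P Q ⁻¹' T) := by
  conv_lhs => rw [← image_preimage_eq T (mirrorChart P Q).surjective, image_image]
  simp only [reflLine_mirrorChart h]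

lemma onRight_centerChart_iff (him : (Q - P).im ≠ 0) :
    onRight P Q (centerChart P Q w) ↔ 0 < (sideOrientation (Q - P)).areaForm (Q - P) w := by
  rw [onRight_iff him, centerChart_apply, add_sub_cancel_left]

lemma onLeft_mirrorChart_iff (him : (Q - P).im ≠ 0) :
    onLeft P Q (mirrorChart P Q w) ↔ 0 < (sideOrientation (Q - P)).areaForm (Q - P) w := by
  rw [onLeft_iff him, mirrorChart_apply, add_sub_cancel_left, areaForm_reflection_singleton,
    neg_neg_iff_pos]

lemma isActive_centerChart_iff {D : Set ℂ} {o : Orientation ℝ ℂ (Fin 2)} (h : P ≠ Q) :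
    IsActive D P Q (centerChart P Q w) ↔ w ∈ frontier (centerChart P Q ⁻¹' D) ∧
      o.areaForm (Q - P) w ≠ 0 ∧ w ∈ closure (mirrorChart P Q ⁻¹' D) := by
  rw [IsActive, reflLine_centerChart h, mem_lineThrough_iff_areaForm_eq_zero o h,
    frontier_preimage_affineIsometryEquiv, closure_preimage_affineIsometryEquiv,
    centerChart_apply, add_sub_cancel_left]
  rfl

lemma isActive_mirrorChart_iff {D : Set ℂ} {o : Orientation ℝ ℂ (Fin 2)} (h : P ≠ Q) :
    IsActive D P Q (mirrorChart P Q w) ↔ w ∈ frontier (mirrorChart P Q ⁻¹' D) ∧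
      o.areaForm (Q - P) w ≠ 0 ∧ w ∈ closure (centerChart P Q ⁻¹' D) := by
  rw [IsActive, reflLine_mirrorChart h, mem_lineThrough_iff_areaForm_eq_zero o h,
    frontier_preimage_affineIsometryEquiv, closure_preimage_affineIsometryEquiv,
    mirrorChart_apply, add_sub_cancel_left, areaForm_reflection_singleton, neg_eq_zero]
  rfl

lemma onLeft_left_add_iff (him : (Q - P).im ≠ 0) :
    onLeft P Q (P + w) ↔ (sideOrientation (Q - P)).areaForm (Q - P) w < 0 := by
  rw [onLeft_iff him, add_sub_right_comm, left_sub_midpoint, ← neg_sub Q P, smul_neg, map_add,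
    map_neg, map_smul, Orientation.areaForm_apply_self, smul_zero, neg_zero, zero_add]

/-! ### The domain and its normals -/

namespace MirrorSetup

variable (S : MirrorSetup) {A B y : ℂ}

lemma inner_nonneg (hA : A ∈ frontier S.D) (hy : y ∈ closure S.D) : 0 ≤ ⟪y - A, S.n A⟫ :=
  dotR_eq_inner _ _ ▸ S.hn_normal A hA y hy

lemma normal_ne_zero (hA : A ∈ frontier S.D) : S.n A ≠ 0 :=
  norm_ne_zero_iff.1 (S.hn_unit A hA ▸ one_ne_zero)

lemma inner_pos (hA : A ∈ frontier S.D) (hy : y ∈ S.D) : 0 < ⟪y - A, S.n A⟫ :=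
  inner_sub_pos_of_mem S.hOpen (S.normal_ne_zero hA)
    (fun _ hy => S.inner_nonneg hA (subset_closure hy)) hy

lemma midpoint_mem (hA : A ∈ frontier S.D) (hB : B ∈ frontier S.D) (h : A ≠ B) :
    midpoint ℝ A B ∈ S.D :=
  S.hStrict A (frontier_subset_closure hA) B (frontier_subset_closure hB) h
    (midpoint_mem_openSegment A B)

lemma inner_pos_of_ne (hA : A ∈ frontier S.D) (hB : B ∈ frontier S.D) (h : A ≠ B) :
    0 < ⟪B - A, S.n A⟫ := by
  have hmid := S.inner_pos hA (S.midpoint_mem hA hB h)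
  rw [midpoint_sub_left, real_inner_smul_left] at hmid
  exact pos_of_mul_pos_right hmid (invOf_nonneg.2 zero_le_two)

lemma isInwardNormal (hA : A ∈ frontier S.D) : IsInwardNormal S.D A (S.n A) := by
  obtain ⟨t₀, rfl⟩ := S.hγrange.ge hA
  refine isInwardNormal_of_hasDerivAt S.hConv S.hOpen S.hNe
    (S.hγsmooth.differentiable two_ne_zero t₀).hasDerivAt
    (norm_ne_zero_iff.1 (S.hγspeed t₀ ▸ one_ne_zero))
    (fun t => frontier_subset_closure (S.hγrange.le (mem_range_self t))) (S.normal_ne_zero hA)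
    fun y hy => S.inner_nonneg hA hy

lemma mem_tangentLine_iff : H ∈ tangentLine S A ↔ ⟪H - A, S.n A⟫ = 0 :=
  dotR_eq_inner (H - A) (S.n A) ▸ Iff.rfl

lemma tangentThrough (hA : A ∈ frontier S.D) (hH : H ∈ tangentLine S A) :
    TangentThrough S.D A H :=
  ⟨S.n A, S.isInwardNormal hA, S.mem_tangentLine_iff.1 hH⟩

lemma preimage_tangentLine {φ : ℂ ≃ᵃⁱ[ℝ] ℂ} {a h : ℂ} (ha : φ a ∈ frontier S.D)
    (hh : φ h ∈ tangentLine S (φ a)) (hne : h ≠ a) :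
    φ ⁻¹' tangentLine S (φ a) = lineThrough a h := by
  have hmem (z : ℂ) : z ∈ φ ⁻¹' tangentLine S (φ a) ↔
      ⟪z - a, φ.linearIsometryEquiv.symm (S.n (φ a))⟫ = 0 := by
    rw [mem_preimage, S.mem_tangentLine_iff, ← vsub_eq_sub, ← φ.map_vsub,
      LinearIsometryEquiv.inner_map_eq_flip, vsub_eq_sub]
  ext z
  refine (hmem z).trans ⟨fun hz => ?_, ?_⟩
  · obtain ⟨t, ht⟩ := exists_smul_eq_of_inner_eq_zero
      ((map_ne_zero_iff _ φ.linearIsometryEquiv.symm.injective).2 (S.normal_ne_zero ha))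
      (sub_ne_zero.2 hne) ((hmem h).1 hh) hz
    exact ⟨t, by rw [ht, add_sub_cancel]⟩
  · rintro ⟨t, rfl⟩
    rw [add_sub_cancel_left, real_inner_smul_left, (hmem h).1 hh, mul_zero]

lemma exists_smul_of_isHinge (hP : P ∈ frontier S.D) (hQ : Q ∈ frontier S.D) (hne : P ≠ Q)
    (hH : IsHinge S P Q A H) (hlow : H ∉ rayFrom Q P) :
    ∃ x ≤ -(1 / 2 : ℝ), midpoint ℝ P Q + x • (Q - P) = H := by
  obtain ⟨⟨hA, -⟩, hHl, hT⟩ := hH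
  obtain ⟨x, rfl⟩ := mem_lineThrough_iff.1 hHl
  refine ⟨x, ?_, rfl⟩
  rw [midpoint_add_smul_mem_rayFrom_swap_iff hne, not_le] at hlow
  by_contra! hx
  refine (S.inner_pos hA (S.hStrict P (frontier_subset_closure hP) Q (frontier_subset_closure hQ)
    hne ?_)).ne' (S.mem_tangentLine_iff.1 hT)
  rw [openSegment_eq_image']
  exact ⟨x + 1 / 2, ⟨by linarith, by linarith⟩,
    by simp only [add_smul_sub_eq_midpoint, add_sub_cancel_right]⟩

end MirrorSetup

/-! ### Normals on the lower arc -/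

lemma areaForm_orientation_sub (A B X : ℂ) : Complex.orientation.areaForm (B - A) (X - A) =
    (B.re - A.re) * (X.im - A.im) - (B.im - A.im) * (X.re - A.re) := by
  simp only [map_sub, LinearMap.sub_apply, Complex.areaForm, Complex.mul_im, Complex.conj_re,
    Complex.conj_im, neg_mul]
  ring

lemma inner_sub_eq (A X n : ℂ) : ⟪X - A, n⟫ = (X.re - A.re) * n.re + (X.im - A.im) * n.im := by
  rw [← dotR_eq_inner, dotR, Complex.sub_re, Complex.sub_im]

lemma re_mem_Ioo_of_areaForm_nonpos {A B X m m' : ℂ} (hAB : A.re < B.re) (hm : 0 ≤ m.im)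
    (hm' : 0 ≤ m'.im) (hBm : 0 < ⟪B - A, m⟫) (hXm : 0 < ⟪X - A, m⟫) (hAm' : 0 < ⟪A - B, m'⟫)
    (hXm' : 0 < ⟪X - B, m'⟫) (hX : Complex.orientation.areaForm (B - A) (X - A) ≤ 0) :
    X.re ∈ Ioo A.re B.re := by
  rw [areaForm_orientation_sub] at hX
  rw [inner_sub_eq] at hBm hXm hAm' hXm'
  constructor <;> by_contra! h
  · nlinarith [mul_nonneg (sub_nonneg.2 h) hBm.le, mul_pos (sub_pos.2 hAB) hXm,
      mul_nonneg hm (sub_nonneg.2 hX)]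
  · nlinarith [mul_nonneg (sub_nonneg.2 h) hAm'.le, mul_pos (sub_pos.2 hAB) hXm',
      mul_nonneg hm' (sub_nonneg.2 hX)]

lemma im_pos_of_areaForm_nonpos {A B X n : ℂ} (hre : X.re ∈ Ioo A.re B.re) (hA : 0 < ⟪A - X, n⟫)
    (hB : 0 < ⟪B - X, n⟫) (hX : Complex.orientation.areaForm (B - A) (X - A) ≤ 0) : 0 < n.im := by
  rw [areaForm_orientation_sub] at hX
  rw [inner_sub_eq] at hA hB
  nlinarith [mul_pos hA (sub_pos.2 hre.2), mul_pos hB (sub_pos.2 hre.1)]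

lemma mem_of_mem_arcAvoid {C : Set ℂ} {A B X y : ℂ} (hA : A ∈ C) (hB : B ∈ C)
    (hX : X ∈ arcAvoid C A B y) : X ∈ C := by
  rcases hX with rfl | rfl | hX
  exacts [hA, hB, hX.1.1]

namespace MirrorSetup

variable (S : MirrorSetup) {A B X : ℂ}

lemma sin_α_pos : 0 < Real.sin S.α :=
  Real.sin_pos_of_pos_of_lt_pi S.hα.1 (S.hα.2.trans (half_lt_self Real.pi_pos))

lemma cos_α_pos : 0 < Real.cos S.α :=
  Real.cos_pos_of_mem_Ioo ⟨by linarith [S.hα.1, Real.pi_pos], S.hα.2⟩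

lemma n_P₁ : S.n S.P₁ = ⟨Real.cos S.α, Real.sin S.α⟩ := by
  rw [S.hP₁n]
  exact Complex.ext (Complex.exp_ofReal_mul_I_re _) (Complex.exp_ofReal_mul_I_im _)

lemma n_P₁' : S.n S.P₁' = ⟨-Real.cos S.α, Real.sin S.α⟩ := by
  rw [S.hP₁'n]
  refine Complex.ext ?_ ?_
  · rw [Complex.exp_ofReal_mul_I_re, Real.cos_pi_sub]
  · rw [Complex.exp_ofReal_mul_I_im, Real.sin_pi_sub]

lemma n_Q₆_im : (S.n S.Q₆).im = -Real.sin S.α := by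
  rw [S.hQ₆n, ← Complex.ofReal_neg, Complex.exp_ofReal_mul_I_im, Real.sin_neg]

lemma P₁_ne_P₁' : S.P₁ ≠ S.P₁' := fun h => by
  have hn := S.n_P₁'
  rw [← h, S.n_P₁, Complex.mk.injEq] at hn
  linarith [hn.1, S.cos_α_pos]

lemma P₁_re_lt : S.P₁.re < S.P₁'.re := by
  have h := S.inner_pos_of_ne S.hP₁ S.hP₁' S.P₁_ne_P₁'
  have h' := S.inner_pos_of_ne S.hP₁' S.hP₁ S.P₁_ne_P₁'.symm
  rw [inner_sub_eq, S.n_P₁] at h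
  rw [inner_sub_eq, S.n_P₁'] at h'
  nlinarith [S.cos_α_pos]

lemma normal_im_pos_of_areaForm_nonpos (hX : X ∈ frontier S.D) (h : X ≠ S.P₁) (h' : X ≠ S.P₁')
    (hbelow : Complex.orientation.areaForm (S.P₁' - S.P₁) (X - S.P₁) ≤ 0) : 0 < (S.n X).im := by
  refine im_pos_of_areaForm_nonpos ?_ (S.inner_pos_of_ne hX S.hP₁ h)
    (S.inner_pos_of_ne hX S.hP₁' h') hbelow
  exact re_mem_Ioo_of_areaForm_nonpos S.P₁_re_lt (S.n_P₁ ▸ S.sin_α_pos.le)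
    (S.n_P₁' ▸ S.sin_α_pos.le) (S.inner_pos_of_ne S.hP₁ S.hP₁' S.P₁_ne_P₁')
    (S.inner_pos_of_ne S.hP₁ hX h.symm) (S.inner_pos_of_ne S.hP₁' S.hP₁ S.P₁_ne_P₁'.symm)
    (S.inner_pos_of_ne S.hP₁' hX h'.symm) hbelow

lemma isPreconnected_above_chord (hA : A ∈ frontier S.D) (hB : B ∈ frontier S.D) (h : A ≠ B) :
    IsPreconnected (frontier S.D ∩ {X | 0 < Complex.orientation.areaForm (B - A) (X - A)}) := by
  have hmid : Complex.orientation.areaForm (B - A) (midpoint ℝ A B - A) = 0 := by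
    rw [midpoint_sub_left, map_smul, Orientation.areaForm_apply_self, smul_zero]
  rw [map_sub _ _ A, sub_eq_zero] at hmid
  convert isPreconnected_frontier_inter_lt S.hConv S.hOpen S.hBdd (S.midpoint_mem hA hB h)
    (Complex.orientation.areaForm (B - A)) using 4
  rw [map_sub _ _ A, sub_pos, hmid]

lemma areaForm_nonpos_of_mem_lowerArc (hP : P ∈ lowerArc S) :
    Complex.orientation.areaForm (S.P₁' - S.P₁) (P - S.P₁) ≤ 0 := by
  rcases hP with rfl | rfl | ⟨⟨hPf, -⟩, hPc⟩
  · simp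
  · rw [Orientation.areaForm_apply_self]
  have hn := S.n_Q₆_im
  have hQ : 0 < Complex.orientation.areaForm (S.P₁' - S.P₁) (S.Q₆ - S.P₁) := by
    by_contra! hle
    refine (S.normal_im_pos_of_areaForm_nonpos S.hQ₆ (fun h => ?_) (fun h => ?_) hle).not_gt
      (hn ▸ neg_neg_of_pos S.sin_α_pos)
    · rw [h, S.n_P₁] at hn
      linarith [S.sin_α_pos]
    · rw [h, S.n_P₁'] at hn
      linarith [S.sin_α_pos]
  by_contra! hP
  refine hPc ((S.isPreconnected_above_chord S.hP₁ S.hP₁' S.P₁_ne_P₁').subset_connectedComponentIn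
    ⟨S.hQ₆, hQ⟩ ?_ ⟨hPf, hP⟩)
  rintro X ⟨hX, hX'⟩
  refine ⟨hX, ?_⟩
  rintro (rfl | rfl)
  · simp at hX'
  · exact hX'.ne' (Orientation.areaForm_apply_self _ _)

lemma normal_im_pos_of_mem_lowerArc (hP : P ∈ lowerArc S) : 0 < (S.n P).im := by
  by_cases h : P = S.P₁
  · rw [h, S.n_P₁]
    exact S.sin_α_pos
  by_cases h' : P = S.P₁'
  · rw [h', S.n_P₁']
    exact S.sin_α_pos
  exact S.normal_im_pos_of_areaForm_nonpos (mem_of_mem_arcAvoid S.hP₁ S.hP₁' hP) h h'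
    (S.areaForm_nonpos_of_mem_lowerArc hP)

end MirrorSetup

/-! ### Angles of chords -/

lemma exists_smul_exp_segAngle (P Q : ℂ) :
    ∃ r : ℝ, r • Complex.exp (segAngle P Q * Complex.I) = Q - P := by
  have hu : ‖Q - P‖ • Complex.exp (Complex.arg (Q - P) * Complex.I) = Q - P :=
    Complex.norm_mul_exp_arg_mul_I _
  unfold segAngle
  split_ifs with h h'
  · refine ⟨-‖Q - P‖, ?_⟩
    rw [Complex.ofReal_add, add_mul, Complex.exp_add, Complex.exp_pi_mul_I, mul_neg_one,
      neg_smul_neg, hu]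
  · refine ⟨-‖Q - P‖, ?_⟩
    rw [h', Complex.exp_pi_mul_I, smul_neg, ← neg_smul] at hu
    rw [Complex.ofReal_zero, zero_mul, Complex.exp_zero, hu]
  · exact ⟨‖Q - P‖, hu⟩

lemma ne_of_segAngle_pos (h : 0 < segAngle P Q) : P ≠ Q := by
  rintro rfl
  simp [segAngle, Real.pi_pos.ne] at h

lemma arg2pi_eq_arg {n : ℂ} (hn : 0 < n.im) : arg2pi n = n.arg :=
  if_neg (Complex.arg_neg_iff.not.2 hn.not_gt)

lemma arg_lt_pi {n : ℂ} (hn : 0 < n.im) : n.arg < Real.pi :=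
  (Complex.arg_le_pi n).lt_of_ne fun h => hn.ne' (Complex.arg_eq_pi_iff.1 h).2

lemma sub_im_ne_zero_of_segAngle (h0 : 0 < segAngle P Q) (hpi : segAngle P Q < Real.pi) :
    (Q - P).im ≠ 0 := by
  obtain ⟨r, hr⟩ := exists_smul_exp_segAngle P Q
  have hsin := Real.sin_pos_of_pos_of_lt_pi h0 hpi
  rw [← hr, Complex.smul_im, Complex.exp_ofReal_mul_I_im, smul_eq_mul]
  refine mul_ne_zero ?_ hsin.ne'
  rintro rfl
  rw [zero_smul, eq_comm, sub_eq_zero] at hr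
  exact ne_of_segAngle_pos h0 hr.symm

lemma onLeft_add_of_segAngle_lt_arg {n : ℂ} (h0 : 0 < segAngle P Q)
    (h : segAngle P Q < n.arg) (hn : n.arg < Real.pi) : onLeft P Q (P + n) := by
  obtain ⟨r, hr⟩ := exists_smul_exp_segAngle P Q
  have hr0 : r ≠ 0 := by
    rintro rfl
    rw [zero_smul, eq_comm, sub_eq_zero] at hr
    exact ne_of_segAngle_pos h0 hr.symm
  set θ := segAngle P Q
  have hsin : 0 < Real.sin θ := Real.sin_pos_of_pos_of_lt_pi h0 (h.trans hn)
  have hsub : 0 < Real.sin (n.arg - θ) :=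
    Real.sin_pos_of_pos_of_lt_pi (sub_pos.2 h) (by linarith)
  have hnorm : 0 < ‖n‖ := by
    refine norm_pos_iff.2 ?_
    rintro rfl
    rw [Complex.arg_zero] at h
    exact h0.not_gt h
  refine ⟨‖n‖ * Real.sin (n.arg - θ) / Real.sin θ, by positivity,
    ‖n‖ * Real.sin n.arg / Real.sin θ / r, ?_⟩
  rw [← hr, smul_smul, div_mul_cancel₀ _ hr0, add_assoc, add_right_inj]
  refine Complex.ext ?_ ?_
  · rw [Complex.add_re, Complex.ofReal_re, Complex.smul_re, Complex.exp_ofReal_mul_I_re,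
      Real.sin_sub, smul_eq_mul, ← Complex.norm_mul_cos_arg n]
    field_simp
    ring
  · rw [Complex.add_im, Complex.ofReal_im, Complex.smul_im, Complex.exp_ofReal_mul_I_im,
      smul_eq_mul, div_mul_cancel₀ _ hsin.ne', Complex.norm_mul_sin_arg, add_zero]

namespace classA

variable {S : MirrorSetup} {P₃ : ℂ}

lemma mem_frontier_left (h : classA S P₃ P Q) : P ∈ frontier S.D :=
  mem_of_mem_arcAvoid S.hP₁ S.hP₁' h.1

lemma mem_frontier_right (h : classA S P₃ P Q) : Q ∈ frontier S.D :=
  mem_of_mem_arcAvoid S.hQ₆' S.hQ₆ h.2.1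

lemma segAngle_pos (h : classA S P₃ P Q) : 0 < segAngle P Q :=
  S.hα.1.trans h.2.2.2.2.1

lemma segAngle_lt_arg (h : classA S P₃ P Q) : segAngle P Q < (S.n P).arg :=
  arg2pi_eq_arg (S.normal_im_pos_of_mem_lowerArc h.1) ▸ h.2.2.2.2.2

lemma arg_normal_lt_pi (h : classA S P₃ P Q) : (S.n P).arg < Real.pi :=
  arg_lt_pi (S.normal_im_pos_of_mem_lowerArc h.1)

lemma sub_im_ne_zero (h : classA S P₃ P Q) : (Q - P).im ≠ 0 :=
  sub_im_ne_zero_of_segAngle h.segAngle_pos (h.segAngle_lt_arg.trans h.arg_normal_lt_pi)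

lemma onLeft_add_normal (h : classA S P₃ P Q) : onLeft P Q (P + S.n P) :=
  onLeft_add_of_segAngle_lt_arg h.segAngle_pos h.segAngle_lt_arg h.arg_normal_lt_pi

end classA

/-! ### The crossing of the boundary curve with its mirror image -/

/-- The right boundary curve of the chord `[P, Q]` and the reflected left one cross at the point
with coordinate `ζ` in `centerChart P Q`, and their tangents there meet the ray from `P` away from
`Q` at the points with coordinates `x • (Q - P)` and `y • (Q - P)`. -/
structure IsMirrorCrossing (S : MirrorSetup) (P Q ζ : ℂ) (x y : ℝ) : Prop extends
    IsCrossing (sideOrientation (Q - P)) (Q - P) (centerChart P Q ⁻¹' S.D)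
      (mirrorChart P Q ⁻¹' S.D) ζ x y where
  mem_tangentLine_center : centerChart P Q (x • (Q - P)) ∈ tangentLine S (centerChart P Q ζ)
  mem_tangentLine_mirror : mirrorChart P Q (y • (Q - P)) ∈ tangentLine S (mirrorChart P Q ζ)
  fst_le_neg_half : x ≤ -(1 / 2)
  snd_le_neg_half : y ≤ -(1 / 2)

namespace MirrorSetup

variable (S : MirrorSetup) {Z ζ : ℂ} {y : ℝ}

local notation "ω" => Orientation.areaForm (sideOrientation (Q - P))

/-- Since the normal at `P` points to the left, pushing `P` off the chord to the right leaves the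
domain while its mirror image enters it. -/
lemma exists_mem_mirrorChart_notMem_centerChart (hP : P ∈ frontier S.D)
    (him : (Q - P).im ≠ 0) (hleft : onLeft P Q (P + S.n P)) (hζ : 0 < ω (Q - P) ζ) :
    ∃ w ∈ mirrorChart P Q ⁻¹' S.D \ centerChart P Q ⁻¹' S.D, 0 < ω (Q - P) w ∧ 0 < ω ζ w := by
  set o := sideOrientation (Q - P)
  set J := o.rightAngleRotation (Q - P)
  have hu : Q - P ≠ 0 := sub_ne_zero.2 (ne_of_sub_im_ne_zero him).symm
  have hn : ⟪J, S.n P⟫ < 0 := by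
    rw [o.inner_rightAngleRotation_left]
    exact (onLeft_left_add_iff him).1 hleft
  have hcenter (ε : ℝ) : centerChart P Q ((-(1 / 2) : ℝ) • (Q - P) + ε • J) = P + ε • J := by
    rw [centerChart_apply, ← add_assoc, midpoint_add_neg_half_smul]
  have hJ : (ℝ ∙ (Q - P)).reflection J = -J := by
    refine Submodule.reflection_mem_subspace_orthogonalComplement_eq_neg
      (Submodule.mem_orthogonal_singleton_iff_inner_right.2 ?_)
    rw [o.inner_rightAngleRotation_right, o.areaForm_apply_self, neg_zero]
  have hmirror (ε : ℝ) :
      mirrorChart P Q ((-(1 / 2) : ℝ) • (Q - P) + ε • J) = P + ε • -J := by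
    rw [mirrorChart_apply, map_add, ← add_assoc, ← mirrorChart_apply, mirrorChart_smul,
      midpoint_add_neg_half_smul, map_smul, hJ]
  have hζP : 0 < ω ζ ((-(1 / 2) : ℝ) • (Q - P)) := by
    rw [map_smul, o.areaForm_swap, smul_eq_mul]
    linarith
  obtain ⟨ε, hD, hpos, hε : 0 < ε⟩ := (((S.isInwardNormal hP (-J)).2
    (by rwa [inner_neg_left, neg_pos])).and
      ((eventually_pos_map_add_smul hζP J).and self_mem_nhdsWithin)).exists
  refine ⟨_, ⟨(congrArg (· ∈ S.D) (hmirror ε)).mpr hD, fun hD' => ?_⟩, ?_, hpos⟩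
  · have h := S.inner_nonneg hP (subset_closure hD')
    rw [hcenter, add_sub_cancel_left, real_inner_smul_left] at h
    exact h.not_gt (mul_neg_of_pos_of_neg hε hn)
  · rw [map_add, map_smul, map_smul, o.areaForm_apply_self, smul_zero, zero_add,
      o.areaForm_rightAngleRotation_right, smul_eq_mul]
    exact mul_pos hε (real_inner_self_pos.2 hu)

lemma exists_chart_of_mem (him : (Q - P).im ≠ 0)
    (hZ : Z ∈ bdRight S P Q ∩ (reflLine P Q '' bdLeft S P Q)) :
    ∃ ζ, centerChart P Q ζ = Z ∧ 0 < ω (Q - P) ζ ∧ centerChart P Q ζ ∈ frontier S.D ∧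
      mirrorChart P Q ζ ∈ frontier S.D := by
  have h := ne_of_sub_im_ne_zero him
  obtain ⟨⟨hZf, hZr⟩, W, ⟨hWf, -⟩, rfl⟩ := hZ
  obtain ⟨ζ, rfl⟩ := (mirrorChart P Q).surjective W
  rw [reflLine_mirrorChart h] at hZf hZr ⊢
  exact ⟨ζ, rfl, (onRight_centerChart_iff him).1 hZr, hZf, hWf⟩

/-- Two tangent lines meeting the chord line in the same point would coincide. -/
lemma ne_of_tangentLine_ne (hζ : 0 < ω (Q - P) ζ)
    (hc : centerChart P Q ζ ∈ frontier S.D) (hm : mirrorChart P Q ζ ∈ frontier S.D)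
    (hx : centerChart P Q (x • (Q - P)) ∈ tangentLine S (centerChart P Q ζ))
    (hy : mirrorChart P Q (y • (Q - P)) ∈ tangentLine S (mirrorChart P Q ζ))
    (htan : tangentLine S (centerChart P Q ζ) ≠
      centerChart P Q '' (mirrorChart P Q ⁻¹' tangentLine S (mirrorChart P Q ζ))) : x ≠ y := by
  rintro rfl
  have hne : x • (Q - P) ≠ ζ := by
    rintro rfl
    rw [map_smul, Orientation.areaForm_apply_self, smul_zero] at hζ
    exact hζ.false
  refine htan ?_
  rw [S.preimage_tangentLine hm hy hne, ← S.preimage_tangentLine hc hx hne,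
    image_preimage_eq _ (centerChart P Q).surjective]

lemma exists_isMirrorCrossing (hP : P ∈ frontier S.D) (hQ : Q ∈ frontier S.D) (him : (Q - P).im ≠ 0)
    (hleft : onLeft P Q (P + S.n P))
    (hZ : bdRight S P Q ∩ (reflLine P Q '' bdLeft S P Q) = {Z})
    (htan : tangentLine S Z ≠ reflLine P Q '' tangentLine S (reflLine P Q Z))
    (hray : (tangentLine S Z ∩ rayFrom P Q).Nonempty)
    (hray' : ((reflLine P Q '' tangentLine S (reflLine P Q Z)) ∩ rayFrom P Q).Nonempty) :
    ∃ ζ x y, IsMirrorCrossing S P Q ζ x y := by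
  have h := ne_of_sub_im_ne_zero him
  obtain ⟨ζ, rfl, hζ, hc, hm⟩ := S.exists_chart_of_mem him (hZ.ge rfl)
  rw [reflLine_centerChart h, image_reflLine h] at htan hray'
  obtain ⟨_, hx, hxray⟩ := hray
  obtain ⟨x, hx2, rfl⟩ := mem_rayFrom_iff.1 hxray
  obtain ⟨_, ⟨b, hy, rfl⟩, hyray⟩ := hray'
  obtain ⟨y, hy2, hby⟩ := mem_rayFrom_iff.1 hyray
  obtain rfl : b = y • (Q - P) := (centerChart P Q).injective hby
  have hmid := S.midpoint_mem hP hQ h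
  exact ⟨ζ, x, y, {
    fst := .preimage S.hConv S.hOpen S.hBdd (by simpa [centerChart_apply] using hmid)
    snd := .preimage S.hConv S.hOpen S.hBdd (by simpa [mirrorChart_apply] using hmid)
    pos := hζ
    mem_frontier_fst := frontier_preimage_affineIsometryEquiv _ S.D ▸ hc
    mem_frontier_snd := frontier_preimage_affineIsometryEquiv _ S.D ▸ hm
    unique := fun w hw hw₁ hw₂ => by
      rw [frontier_preimage_affineIsometryEquiv] at hw₁ hw₂
      exact (centerChart P Q).injective (hZ.le ⟨⟨hw₁, (onRight_centerChart_iff him).2 hw⟩,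
        _, ⟨hw₂, (onLeft_mirrorChart_iff him).2 hw⟩, reflLine_mirrorChart h w⟩)
    tangent_fst := (S.tangentThrough hc hx).preimage
    tangent_snd := (S.tangentThrough hm hy).preimage
    fst_neg := by linarith
    snd_neg := by linarith
    ne := S.ne_of_tangentLine_ne hζ hc hm hx hy htan
    exists_mem := S.exists_mem_mirrorChart_notMem_centerChart hP him hleft hζ
    mem_tangentLine_center := hx
    mem_tangentLine_mirror := hy
    fst_le_neg_half := hx2
    snd_le_neg_half := hy2 }⟩

end MirrorSetup

namespace IsMirrorCrossing

variable {S : MirrorSetup} {ζ A : ℂ} {y : ℝ}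

lemma isHinge_center (h : IsMirrorCrossing S P Q ζ x y) (hne : P ≠ Q) :
    IsHinge S P Q (centerChart P Q ζ) (midpoint ℝ P Q + x • (Q - P)) :=
  ⟨(isActive_centerChart_iff hne).2 ⟨h.mem_frontier_fst, h.pos.ne',
    frontier_subset_closure h.mem_frontier_snd⟩, mem_lineThrough_iff.2 ⟨x, rfl⟩,
    h.mem_tangentLine_center⟩

lemma isHinge_mirror (h : IsMirrorCrossing S P Q ζ x y) (hne : P ≠ Q) :
    IsHinge S P Q (mirrorChart P Q ζ) (midpoint ℝ P Q + y • (Q - P)) :=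
  ⟨(isActive_mirrorChart_iff hne).2 ⟨h.mem_frontier_snd, h.pos.ne',
    frontier_subset_closure h.mem_frontier_fst⟩, mem_lineThrough_iff.2 ⟨y, rfl⟩,
    mirrorChart_smul P Q y ▸ h.mem_tangentLine_mirror⟩

lemma dPQ_le_center (h : IsMirrorCrossing S P Q ζ x y) (hP : P ∈ frontier S.D)
    (hQ : Q ∈ frontier S.D) (him : (Q - P).im ≠ 0) (hH : IsHinge S P Q A H)
    (hlow : H ∉ rayFrom Q P) (hA : onRight P Q A) :
    dPQ P Q H ≤ dPQ P Q (midpoint ℝ P Q + x • (Q - P)) := by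
  have hne := ne_of_sub_im_ne_zero him
  obtain ⟨z, hz, rfl⟩ := S.exists_smul_of_isHinge hP hQ hne hH hlow
  obtain ⟨a, rfl⟩ := (centerChart P Q).surjective A
  obtain ⟨hfrontier, -, hclosure⟩ :=
    (isActive_centerChart_iff (o := sideOrientation (Q - P)) hne).1 hH.1
  rw [dPQ_midpoint_add_smul hne hz, dPQ_midpoint_add_smul hne h.fst_le_neg_half]
  gcongr
  exact h.fst_le ((onRight_centerChart_iff him).1 hA) hfrontier hclosure
    (S.tangentThrough hH.1.1 hH.2.2 : TangentThrough S.D _ (centerChart P Q _)).preimage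
    (by linarith)

lemma mirror_le_dPQ (h : IsMirrorCrossing S P Q ζ x y) (hP : P ∈ frontier S.D)
    (hQ : Q ∈ frontier S.D) (him : (Q - P).im ≠ 0) (hH : IsHinge S P Q A H)
    (hlow : H ∉ rayFrom Q P) (hA : onLeft P Q A) :
    dPQ P Q (midpoint ℝ P Q + y • (Q - P)) ≤ dPQ P Q H := by
  have hne := ne_of_sub_im_ne_zero him
  obtain ⟨z, hz, rfl⟩ := S.exists_smul_of_isHinge hP hQ hne hH hlow
  obtain ⟨a, rfl⟩ := (mirrorChart P Q).surjective A
  obtain ⟨hfrontier, -, hclosure⟩ :=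
    (isActive_mirrorChart_iff (o := sideOrientation (Q - P)) hne).1 hH.1
  have hT := S.tangentThrough hH.1.1 hH.2.2
  rw [← mirrorChart_smul] at hT
  rw [dPQ_midpoint_add_smul hne hz, dPQ_midpoint_add_smul hne h.snd_le_neg_half]
  gcongr
  exact h.le_snd ((onLeft_mirrorChart_iff him).1 hA) hfrontier hclosure hT.preimage (by linarith)

lemma dPQ_center_lt_mirror (h : IsMirrorCrossing S P Q ζ x y) (hne : P ≠ Q) :
    dPQ P Q (midpoint ℝ P Q + x • (Q - P)) < dPQ P Q (midpoint ℝ P Q + y • (Q - P)) := by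
  rw [dPQ_midpoint_add_smul hne h.fst_le_neg_half, dPQ_midpoint_add_smul hne h.snd_le_neg_half]
  gcongr
  exacts [norm_pos_iff.2 (sub_ne_zero.2 hne.symm), h.snd_lt_fst]

end IsMirrorCrossing

theorem extreme_lower_hinges_general (S : MirrorSetup) {P Q Z : ℂ} (hP : P ∈ frontier S.D)
    (hQ : Q ∈ frontier S.D) (him : (Q - P).im ≠ 0) (hleft : onLeft P Q (P + S.n P))
    (hZ : bdRight S P Q ∩ (reflLine P Q '' bdLeft S P Q) = {Z})
    (htan : tangentLine S Z ≠ reflLine P Q '' tangentLine S (reflLine P Q Z))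
    (hray : (tangentLine S Z ∩ rayFrom P Q).Nonempty)
    (hray' : ((reflLine P Q '' tangentLine S (reflLine P Q Z)) ∩ rayFrom P Q).Nonempty) :
    ∃ Pl Hl Pr Hr : ℂ,
      onLeft P Q Pl ∧ IsHinge S P Q Pl Hl ∧ Hl ∉ rayFrom Q P ∧
      (∀ A H : ℂ, IsHinge S P Q A H → H ∉ rayFrom Q P → onLeft P Q A →
        dPQ P Q Hl ≤ dPQ P Q H) ∧
      onRight P Q Pr ∧ IsHinge S P Q Pr Hr ∧ Hr ∉ rayFrom Q P ∧
      (∀ A H : ℂ, IsHinge S P Q A H → H ∉ rayFrom Q P → onRight P Q A →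
        dPQ P Q H ≤ dPQ P Q Hr) ∧
      dPQ P Q Hr < dPQ P Q Hl := by
  have hne := ne_of_sub_im_ne_zero him
  obtain ⟨ζ, x, y, h⟩ := S.exists_isMirrorCrossing hP hQ him hleft hZ htan hray hray'
  have hlow {z : ℝ} (hz : z ≤ -(1 / 2)) : midpoint ℝ P Q + z • (Q - P) ∉ rayFrom Q P :=
    (midpoint_add_smul_mem_rayFrom_swap_iff hne).not.2 (by linarith)
  exact ⟨mirrorChart P Q ζ, midpoint ℝ P Q + y • (Q - P),
    centerChart P Q ζ, midpoint ℝ P Q + x • (Q - P),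
    (onLeft_mirrorChart_iff him).2 h.pos, h.isHinge_mirror hne, hlow h.snd_le_neg_half,
    fun _ _ => h.mirror_le_dPQ hP hQ him,
    (onRight_centerChart_iff him).2 h.pos, h.isHinge_center hne, hlow h.fst_le_neg_half,
    fun _ _ => h.dPQ_le_center hP hQ him,
    h.dPQ_center_lt_mirror hne⟩

end ComplexPlane

/-- Lemma 3.2 (first part) of the paper: for every segment `[P,Q] ∈ 𝒜(P₁,P₃)` there is a
left boundary point `P_←` with a lower hinge `H_←` minimizing `d_{P,Q}` among all lower
left hinges, and a right boundary point `P_→` with a lower hinge `H_→` maximizing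
`d_{P,Q}` among all lower right hinges; moreover `d_{P,Q}(H_←) > d_{P,Q}(H_→)`. -/
theorem extreme_lower_hinges
    (S : MirrorSetup) (P₃ Q₃ : ℂ)
    (hP₃ : P₃ ∈ lowerArc S) (hQ₃ : Q₃ ∈ upperArc S)
    (hP₃ord : S.P₁.re < P₃.re) (hangle₃ : segAngle P₃ Q₃ = S.α)
    (hA3 : AssumptionA3 S P₃) (hA4 : AssumptionA4 S P₃) :
    ∀ P Q : ℂ, classA S P₃ P Q →
      ∃ Pl Hl Pr Hr : ℂ,
        onLeft P Q Pl ∧ IsHinge S P Q Pl Hl ∧ Hl ∉ rayFrom Q P ∧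
        (∀ A H : ℂ, IsHinge S P Q A H → H ∉ rayFrom Q P → onLeft P Q A →
          dPQ P Q Hl ≤ dPQ P Q H) ∧
        onRight P Q Pr ∧ IsHinge S P Q Pr Hr ∧ Hr ∉ rayFrom Q P ∧
        (∀ A H : ℂ, IsHinge S P Q A H → H ∉ rayFrom Q P → onRight P Q A →
          dPQ P Q H ≤ dPQ P Q Hr) ∧
        dPQ P Q Hr < dPQ P Q Hl := by
  intro P Q h
  obtain ⟨Z, hZ, htan, hray, hray'⟩ := hA4 P Q h
  exact extreme_lower_hinges_general S h.mem_frontier_left h.mem_frontier_right h.sub_im_ne_zero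
    h.onLeft_add_normal hZ htan hray hray'

end
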